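/- arXiv:2205.08624 — 3 statements merged into one kernel-verified Lean document; each statement's English description precedes it below -/
import Mathlib

section
/- Let ζ ∈ ℂ be a primitive 6th root of unity, and let g₁, g₂, g₃ be the ℂ-algebra automorphisms of the polynomial ring ℂ[x₁,y₁,x₂,y₂] determined by g₁ : (x₁,y₁,x₂,y₂) ↦ (ζx₁, ζ⁻¹y₁, x₂, y₂), g₂ : (x₁,y₁,x₂,y₂) ↦ (x₁, y₁, ζx₂, ζ⁻¹y₂), g₃ : (x₁,y₁,x₂,y₂) ↦ (x₂, y₂, x₁, y₁). Set Q₊ = x₁y₁ + x₂y₂ and Q₋ = x₁y₁ − x₂y₂. Then the ℂ-subspace of homogeneous degree-6 polynomials fixed by g₁, g₂ and g₃ is exactly the set of polynomials of the form α(x₁⁶ + x₂⁶) + β(y₁⁶ + y₂⁶) + A·Q₊³ + B·Q₊Q₋² with α, β, A, B ∈ ℂ; equivalently, it is the span of {x₁⁶ + x₂⁶, y₁⁶ + y₂⁶, Q₊³, Q₊Q₋²} and has dimension 4. -/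
open MvPolynomial

/-- `Q₊ = x₁y₁ + x₂y₂` in `ℂ[x₁,y₁,x₂,y₂]` with variables `x₁ = X 0, y₁ = X 1, x₂ = X 2, y₂ = X 3`. -/
noncomputable def Qplus : MvPolynomial (Fin 4) ℂ := X 0 * X 1 + X 2 * X 3

/-- `Q₋ = x₁y₁ − x₂y₂`. -/
noncomputable def Qminus : MvPolynomial (Fin 4) ℂ := X 0 * X 1 - X 2 * X 3

/-- `g₁ : (x₁,y₁,x₂,y₂) ↦ (ζx₁, ζ⁻¹y₁, x₂, y₂)`. -/
noncomputable def sexticG1 (ζ : ℂ) : MvPolynomial (Fin 4) ℂ →ₐ[ℂ] MvPolynomial (Fin 4) ℂ :=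
  aeval ![C ζ * X 0, C ζ⁻¹ * X 1, X 2, X 3]

/-- `g₂ : (x₁,y₁,x₂,y₂) ↦ (x₁, y₁, ζx₂, ζ⁻¹y₂)`. -/
noncomputable def sexticG2 (ζ : ℂ) : MvPolynomial (Fin 4) ℂ →ₐ[ℂ] MvPolynomial (Fin 4) ℂ :=
  aeval ![X 0, X 1, C ζ * X 2, C ζ⁻¹ * X 3]

/-- `g₃ : (x₁,y₁,x₂,y₂) ↦ (x₂, y₂, x₁, y₁)`. -/
noncomputable def sexticG3 : MvPolynomial (Fin 4) ℂ →ₐ[ℂ] MvPolynomial (Fin 4) ℂ :=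
  aeval ![X 2, X 3, X 0, X 1]

/-!
The rotations `g₁`, `g₂` act on monomials by characters and `g₃` swaps the two pairs of variables,
so an invariant sextic only involves monomials `x₁ᵃ y₁ᵇ x₂ᶜ y₂ᵈ` with `6 ∣ a - b` and `6 ∣ c - d`.
Up to the swap there are four of these: `x₁⁶`, `y₁⁶`, `(x₁y₁)³` and `(x₁y₁)²(x₂y₂)`. Reading off their
coefficients embeds the invariant sextics into a four-dimensional space, and the four given forms,
being invariant and linearly independent, must therefore span them.
-/

lemma zpow_finsetSum₀ {ι G₀ : Type*} [CommGroupWithZero G₀] {a : G₀} (ha : a ≠ 0) (s : Finset ι)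
    (k : ι → ℤ) : a ^ (∑ i ∈ s, k i) = ∏ i ∈ s, a ^ k i := by
  induction s using Finset.cons_induction with
  | empty => simp
  | cons i s hi ih => rw [Finset.sum_cons, Finset.prod_cons, zpow_add₀ ha, ih]

section Rescaling

variable {σ R : Type*} [CommSemiring R]

/-- The diagonal substitution `Xᵢ ↦ cᵢ Xᵢ`, the polynomial counterpart of
`MvPowerSeries.rescale`. -/
noncomputable def rescaleVars (c : σ → R) : MvPolynomial σ R →ₐ[R] MvPolynomial σ R :=
  aeval fun i ↦ C (c i) * X i

lemma rescaleVars_monomial (c : σ → R) (m : σ →₀ ℕ) (a : R) :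
    rescaleVars c (monomial m a) = monomial m ((m.prod fun i k ↦ c i ^ k) * a) := by
  rw [rescaleVars, aeval_monomial, algebraMap_eq, monomial_eq]
  simp only [mul_pow, Finsupp.prod_mul, C_mul, map_finsuppProd, C_pow]
  ring

lemma coeff_rescaleVars (c : σ → R) (P : MvPolynomial σ R) (m : σ →₀ ℕ) :
    coeff m (rescaleVars c P) = (m.prod fun i k ↦ c i ^ k) * coeff m P := by
  classical
  induction P using MvPolynomial.induction_on' with
  | monomial u a =>
    rw [rescaleVars_monomial, coeff_monomial, coeff_monomial]
    split_ifs with h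
    · rw [h]
    · rw [mul_zero]
  | add P Q hP hQ => rw [map_add, coeff_add, hP, hQ, coeff_add, mul_add]

lemma coeff_rescaleVars_zpow {K : Type*} [Field K] [Fintype σ] {ζ : K} (hζ : ζ ≠ 0) (k : σ → ℤ)
    (P : MvPolynomial σ K) (m : σ →₀ ℕ) :
    coeff m (rescaleVars (fun i ↦ ζ ^ k i) P) = ζ ^ (∑ i, k i * m i) * coeff m P := by
  rw [coeff_rescaleVars, Finsupp.prod_fintype _ _ fun _ ↦ pow_zero _, zpow_finsetSum₀ hζ]
  simp only [zpow_mul, zpow_natCast]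

lemma dvd_sum_of_rescaleVars_zpow_eq {K : Type*} [Field K] [Fintype σ] {ζ : K} {n : ℕ} [NeZero n]
    (hζ : IsPrimitiveRoot ζ n) {k : σ → ℤ} {P : MvPolynomial σ K}
    (hP : rescaleVars (fun i ↦ ζ ^ k i) P = P) {m : σ →₀ ℕ} (hm : coeff m P ≠ 0) :
    (n : ℤ) ∣ ∑ i, k i * m i := by
  have hcoeff := coeff_rescaleVars_zpow (hζ.ne_zero (NeZero.ne n)) k P m
  rw [hP] at hcoeff
  exact (hζ.zpow_eq_one_iff_dvd _).1 ((mul_eq_right₀ hm).1 hcoeff.symm)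

end Rescaling

section Action

variable {K : Type*} [Field K]

/-- The rotation `g₁ : (x₁, y₁, x₂, y₂) ↦ (ζx₁, ζ⁻¹y₁, x₂, y₂)` over an arbitrary field. -/
noncomputable def rotateFst (ζ : K) : MvPolynomial (Fin 4) K →ₐ[K] MvPolynomial (Fin 4) K :=
  aeval ![C ζ * X 0, C ζ⁻¹ * X 1, X 2, X 3]

/-- The rotation `g₂ : (x₁, y₁, x₂, y₂) ↦ (x₁, y₁, ζx₂, ζ⁻¹y₂)` over an arbitrary field. -/
noncomputable def rotateSnd (ζ : K) : MvPolynomial (Fin 4) K →ₐ[K] MvPolynomial (Fin 4) K :=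
  aeval ![X 0, X 1, C ζ * X 2, C ζ⁻¹ * X 3]

/-- The swap `g₃ : (x₁, y₁, x₂, y₂) ↦ (x₂, y₂, x₁, y₁)` over an arbitrary commutative semiring. -/
noncomputable def swapPairs (R : Type*) [CommSemiring R] :
    MvPolynomial (Fin 4) R →ₐ[R] MvPolynomial (Fin 4) R :=
  aeval ![X 2, X 3, X 0, X 1]

lemma rotateFst_eq_rescaleVars (ζ : K) :
    rotateFst ζ = rescaleVars fun i ↦ ζ ^ (![1, -1, 0, 0] : Fin 4 → ℤ) i := by
  ext i : 1
  fin_cases i <;> simp [rotateFst, rescaleVars]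

lemma rotateSnd_eq_rescaleVars (ζ : K) :
    rotateSnd ζ = rescaleVars fun i ↦ ζ ^ (![0, 0, 1, -1] : Fin 4 → ℤ) i := by
  ext i : 1
  fin_cases i <;> simp [rotateSnd, rescaleVars]

lemma swapPairs_eq_rename (R : Type*) [CommSemiring R] :
    swapPairs R = rename (Equiv.addRight (2 : Fin 4)) := by
  ext i : 1
  fin_cases i <;> simp [swapPairs]

lemma coeff_equivMapDomain_swapPairs {R : Type*} [CommSemiring R] (P : MvPolynomial (Fin 4) R)
    (m : Fin 4 →₀ ℕ) :
    coeff (m.equivMapDomain (Equiv.addRight 2)) (swapPairs R P) = coeff m P := by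
  rw [swapPairs_eq_rename, Finsupp.equivMapDomain_eq_mapDomain,
    coeff_rename_mapDomain _ (Equiv.injective _)]

lemma dvd_sub_of_rotateFst_eq {ζ : K} {n : ℕ} [NeZero n] (hζ : IsPrimitiveRoot ζ n)
    {P : MvPolynomial (Fin 4) K} (hP : rotateFst ζ P = P) {m : Fin 4 →₀ ℕ} (hm : coeff m P ≠ 0) :
    (n : ℤ) ∣ m 0 - m 1 := by
  rw [rotateFst_eq_rescaleVars] at hP
  simpa [Fin.sum_univ_four, sub_eq_add_neg] using dvd_sum_of_rescaleVars_zpow_eq hζ hP hm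

lemma dvd_sub_of_rotateSnd_eq {ζ : K} {n : ℕ} [NeZero n] (hζ : IsPrimitiveRoot ζ n)
    {P : MvPolynomial (Fin 4) K} (hP : rotateSnd ζ P = P) {m : Fin 4 →₀ ℕ} (hm : coeff m P ≠ 0) :
    (n : ℤ) ∣ m 2 - m 3 := by
  rw [rotateSnd_eq_rescaleVars] at hP
  simpa [Fin.sum_univ_four, sub_eq_add_neg] using dvd_sum_of_rescaleVars_zpow_eq hζ hP hm

/-- The space of sextic forms fixed by `g₁`, `g₂` and `g₃`. -/
noncomputable def invariantSextics (ζ : K) : Submodule K (MvPolynomial (Fin 4) K) :=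
  homogeneousSubmodule (Fin 4) K 6 ⊓
    (LinearMap.eqLocus (rotateFst ζ).toLinearMap LinearMap.id ⊓
      (LinearMap.eqLocus (rotateSnd ζ).toLinearMap LinearMap.id ⊓
        LinearMap.eqLocus (swapPairs K).toLinearMap LinearMap.id))

lemma mem_invariantSextics {ζ : K} {P : MvPolynomial (Fin 4) K} :
    P ∈ invariantSextics ζ ↔ P ∈ homogeneousSubmodule (Fin 4) K 6 ∧
      rotateFst ζ P = P ∧ rotateSnd ζ P = P ∧ swapPairs K P = P :=
  Iff.rfl

end Action

section UpperBound

variable {K : Type*} [Field K]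

/-- The exponent vectors of `x₁⁶`, `y₁⁶`, `(x₁y₁)³` and `(x₁y₁)²(x₂y₂)`, one for each orbit of the
swap on the monomials that can occur in an invariant sextic. -/
noncomputable def orbitExponent (i : Fin 4) : Fin 4 →₀ ℕ :=
  Finsupp.equivFunOnFinite.symm
    (![![6, 0, 0, 0], ![0, 6, 0, 0], ![3, 3, 0, 0], ![2, 2, 1, 1]] i)

lemma eq_degree_or_eq_of_dvd_sub {a b c d n : ℕ} (hdeg : a + b + c + d = n)
    (hab : (n : ℤ) ∣ a - b) (hcd : (n : ℤ) ∣ c - d) :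
    (a = n ∨ b = n ∨ c = n ∨ d = n) ∨ (a = b ∧ c = d) := by
  by_contra! h
  have hab₀ := Int.eq_zero_of_abs_lt_dvd hab (abs_lt.2 ⟨by omega, by omega⟩)
  have hcd₀ := Int.eq_zero_of_abs_lt_dvd hcd (abs_lt.2 ⟨by omega, by omega⟩)
  omega

lemma exists_eq_orbitExponent {m : Fin 4 →₀ ℕ} (hdeg : m.degree = 6)
    (h₀₁ : (6 : ℤ) ∣ m 0 - m 1) (h₂₃ : (6 : ℤ) ∣ m 2 - m 3) :
    ∃ i, m = orbitExponent i ∨ m.equivMapDomain (Equiv.addRight 2) = orbitExponent i := by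
  rw [Finsupp.degree_eq_sum, Fin.sum_univ_four] at hdeg
  have hcases := eq_degree_or_eq_of_dvd_sub hdeg h₀₁ h₂₃
  have hm : m = Finsupp.equivFunOnFinite.symm ![m 0, m 1, m 2, m 3] := by
    ext i
    fin_cases i <;> rfl
  have hswap : m.equivMapDomain (Equiv.addRight 2) =
      Finsupp.equivFunOnFinite.symm ![m 2, m 3, m 0, m 1] := by
    ext i
    fin_cases i <;> rfl
  rw [hswap, hm]
  clear hm hswap h₀₁ h₂₃
  generalize m 0 = a, m 1 = b, m 2 = c, m 3 = d at *
  obtain (rfl | rfl | rfl | rfl) | ⟨rfl, rfl⟩ := hcases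
  · obtain ⟨rfl, rfl, rfl⟩ : b = 0 ∧ c = 0 ∧ d = 0 := by omega
    exact ⟨0, .inl rfl⟩
  · obtain ⟨rfl, rfl, rfl⟩ : a = 0 ∧ c = 0 ∧ d = 0 := by omega
    exact ⟨1, .inl rfl⟩
  · obtain ⟨rfl, rfl, rfl⟩ : a = 0 ∧ b = 0 ∧ d = 0 := by omega
    exact ⟨0, .inr rfl⟩
  · obtain ⟨rfl, rfl, rfl⟩ : a = 0 ∧ b = 0 ∧ c = 0 := by omega
    exact ⟨1, .inr rfl⟩
  · obtain rfl : c = 3 - a := by omega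
    have ha : a ≤ 3 := by omega
    interval_cases a
    exacts [⟨2, .inr rfl⟩, ⟨3, .inr rfl⟩, ⟨3, .inl rfl⟩, ⟨2, .inl rfl⟩]

lemma coeff_orbitExponent_injective {ζ : K} (hζ : IsPrimitiveRoot ζ 6) :
    Function.Injective ((LinearMap.pi fun i ↦ lcoeff K (orbitExponent i)).domRestrict
      (invariantSextics ζ)) := by
  rw [injective_iff_map_eq_zero]
  rintro ⟨P, hP⟩ hcoeff
  obtain ⟨hhom, h₁, h₂, h₃⟩ := mem_invariantSextics.1 hP
  have hzero (i : Fin 4) : coeff (orbitExponent i) P = 0 := congrFun hcoeff i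
  ext m
  by_contra hm
  replace hm : coeff m P ≠ 0 := hm
  have hdeg : m.degree = 6 := by
    rw [Finsupp.degree_eq_weight_one]
    exact hhom hm
  obtain ⟨i, hi | hi⟩ := exists_eq_orbitExponent hdeg
    (dvd_sub_of_rotateFst_eq hζ h₁ hm) (dvd_sub_of_rotateSnd_eq hζ h₂ hm)
  · exact hm (hi ▸ hzero i)
  · have hswap := coeff_equivMapDomain_swapPairs P m
    rw [h₃, hi, hzero] at hswap
    exact hm hswap.symm

lemma finiteDimensional_invariantSextics {ζ : K} (hζ : IsPrimitiveRoot ζ 6) :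
    FiniteDimensional K (invariantSextics ζ) :=
  .of_injective _ (coeff_orbitExponent_injective hζ)

lemma finrank_invariantSextics_le {ζ : K} (hζ : IsPrimitiveRoot ζ 6) :
    Module.finrank K (invariantSextics ζ) ≤ 4 := by
  simpa using LinearMap.finrank_le_finrank_of_injective (coeff_orbitExponent_injective hζ)

end UpperBound

section Forms

/-- `Q₊ = x₁y₁ + x₂y₂` over an arbitrary commutative semiring. -/
noncomputable def quadricPlus (R : Type*) [CommSemiring R] : MvPolynomial (Fin 4) R :=
  X 0 * X 1 + X 2 * X 3

/-- `Q₋ = x₁y₁ - x₂y₂` over an arbitrary commutative ring. -/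
noncomputable def quadricMinus (R : Type*) [CommRing R] : MvPolynomial (Fin 4) R :=
  X 0 * X 1 - X 2 * X 3

/-- The forms `x₁⁶ + x₂⁶`, `y₁⁶ + y₂⁶`, `Q₊³` and `Q₊Q₋²` that span the invariant sextics. -/
noncomputable def basicSextic (R : Type*) [CommRing R] : Fin 4 → MvPolynomial (Fin 4) R :=
  ![X 0 ^ 6 + X 2 ^ 6, X 1 ^ 6 + X 3 ^ 6, quadricPlus R ^ 3,
    quadricPlus R * quadricMinus R ^ 2]

lemma range_basicSextic (R : Type*) [CommRing R] :
    Set.range (basicSextic R) = {X 0 ^ 6 + X 2 ^ 6, X 1 ^ 6 + X 3 ^ 6,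
      quadricPlus R ^ 3, quadricPlus R * quadricMinus R ^ 2} := by
  simp only [basicSextic, Matrix.range_cons, Matrix.range_empty, Set.union_empty,
    Set.singleton_union]

lemma isHomogeneous_quadricPlus (R : Type*) [CommSemiring R] :
    (quadricPlus R).IsHomogeneous 2 :=
  ((isHomogeneous_X R _).mul (isHomogeneous_X R _)).add
    ((isHomogeneous_X R _).mul (isHomogeneous_X R _))

lemma isHomogeneous_quadricMinus (R : Type*) [CommRing R] :
    (quadricMinus R).IsHomogeneous 2 :=
  ((isHomogeneous_X R _).mul (isHomogeneous_X R _)).sub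
    ((isHomogeneous_X R _).mul (isHomogeneous_X R _))

lemma isHomogeneous_basicSextic (R : Type*) [CommRing R] (i : Fin 4) :
    (basicSextic R i).IsHomogeneous 6 := by
  fin_cases i
  · exact (isHomogeneous_X_pow 0 6).add (isHomogeneous_X_pow 2 6)
  · exact (isHomogeneous_X_pow 1 6).add (isHomogeneous_X_pow 3 6)
  · exact (isHomogeneous_quadricPlus R).pow 3
  · exact (isHomogeneous_quadricPlus R).mul ((isHomogeneous_quadricMinus R).pow 2)

lemma swapPairs_basicSextic (R : Type*) [CommRing R] (i : Fin 4) :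
    swapPairs R (basicSextic R i) = basicSextic R i := by
  fin_cases i <;> simp [swapPairs, basicSextic, quadricPlus, quadricMinus] <;> ring

lemma linearIndependent_basicSextic (R : Type*) [CommRing R] [IsDomain R] (h2 : (2 : R) ≠ 0) :
    LinearIndependent R (basicSextic R) := by
  rw [Fintype.linearIndependent_iff]
  intro c hc
  have heval (v : Fin 4 → R) : ∑ i, c i * eval v (basicSextic R i) = 0 := by
    simpa [smul_eval] using congrArg (eval v) hc
  simp only [Fin.sum_univ_four, basicSextic, quadricPlus, quadricMinus] at heval
  have h₀ : c 0 = 0 := by simpa using heval ![1, 0, 0, 0]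
  have h₁ : c 1 = 0 := by simpa using heval ![0, 1, 0, 0]
  have h₂ : c 2 = 0 := by simpa [h₀, h₁, one_add_one_eq_two, h2] using heval ![1, 1, 1, 1]
  have h₃ : c 3 = 0 := by simpa [h₀, h₁, h₂] using heval ![1, 1, 0, 0]
  simp [Fin.forall_fin_succ, h₀, h₁, h₂, h₃]

lemma finrank_span_basicSextic (R : Type*) [CommRing R] [IsDomain R]
    (h2 : (2 : R) ≠ 0) :
    Module.finrank R (Submodule.span R (Set.range (basicSextic R))) = 4 := by
  rw [finrank_span_eq_card (linearIndependent_basicSextic R h2), Fintype.card_fin]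

lemma mem_span_basicSextic {R : Type*} [CommRing R] {P : MvPolynomial (Fin 4) R} :
    P ∈ Submodule.span R (Set.range (basicSextic R)) ↔ ∃ α β A B : R,
      P = C α * (X 0 ^ 6 + X 2 ^ 6) + C β * (X 1 ^ 6 + X 3 ^ 6) +
        C A * quadricPlus R ^ 3 + C B * quadricPlus R * quadricMinus R ^ 2 := by
  rw [Submodule.mem_span_range_iff_exists_fun]
  simp [Fin.exists_fin_succ_pi, Fin.sum_univ_four, basicSextic, smul_eq_C_mul, mul_assoc, eq_comm]

variable {K : Type*} [Field K]

lemma C_mul_mul_C_inv_mul {σ : Type*} {a : K} (ha : a ≠ 0) (p q : MvPolynomial σ K) :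
    C a * p * (C a⁻¹ * q) = p * q := by
  rw [mul_mul_mul_comm, ← C_mul, mul_inv_cancel₀ ha, C_1, one_mul]

lemma rotateFst_basicSextic {ζ : K} (hζ : ζ ^ 6 = 1) (i : Fin 4) :
    rotateFst ζ (basicSextic K i) = basicSextic K i := by
  have hζ₀ : ζ ≠ 0 := (IsUnit.of_pow_eq_one hζ (by norm_num)).ne_zero
  fin_cases i <;> simp [rotateFst, basicSextic, quadricPlus, quadricMinus, mul_pow, ← C_pow, hζ,
    C_mul_mul_C_inv_mul hζ₀]

lemma rotateSnd_basicSextic {ζ : K} (hζ : ζ ^ 6 = 1) (i : Fin 4) :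
    rotateSnd ζ (basicSextic K i) = basicSextic K i := by
  have hζ₀ : ζ ≠ 0 := (IsUnit.of_pow_eq_one hζ (by norm_num)).ne_zero
  fin_cases i <;> simp [rotateSnd, basicSextic, quadricPlus, quadricMinus, mul_pow, ← C_pow, hζ,
    C_mul_mul_C_inv_mul hζ₀]

lemma span_basicSextic_le {ζ : K} (hζ : ζ ^ 6 = 1) :
    Submodule.span K (Set.range (basicSextic K)) ≤ invariantSextics ζ := by
  rw [Submodule.span_le]
  rintro _ ⟨i, rfl⟩
  exact ⟨isHomogeneous_basicSextic K i, rotateFst_basicSextic hζ i, rotateSnd_basicSextic hζ i,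
    swapPairs_basicSextic K i⟩

end Forms

lemma two_ne_zero_of_isPrimitiveRoot {R : Type*} [CommRing R] [IsDomain R] {ζ : R} {n : ℕ}
    [NeZero n] (hζ : IsPrimitiveRoot ζ n) (hn : Even n) : (2 : R) ≠ 0 := by
  have hn₀ : (n : R) ≠ 0 := hζ.neZero'.out
  obtain ⟨k, rfl⟩ := hn.two_dvd
  rw [Nat.cast_mul] at hn₀
  exact_mod_cast left_ne_zero_of_mul hn₀

lemma invariantSextics_eq_span {K : Type*} [Field K] {ζ : K} (hζ : IsPrimitiveRoot ζ 6) :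
    invariantSextics ζ = Submodule.span K (Set.range (basicSextic K)) := by
  have := finiteDimensional_invariantSextics hζ
  refine (Submodule.eq_of_le_of_finrank_le (span_basicSextic_le hζ.pow_eq_one) ?_).symm
  rw [finrank_span_basicSextic K (two_ne_zero_of_isPrimitiveRoot hζ (by decide))]
  exact finrank_invariantSextics_le hζ

theorem invariant_sextics_general {K : Type*} [Field K] {ζ : K} (hζ : IsPrimitiveRoot ζ 6) :
    (invariantSextics ζ : Set (MvPolynomial (Fin 4) K)) =
      {P | ∃ α β A B : K, P = C α * (X 0 ^ 6 + X 2 ^ 6) + C β * (X 1 ^ 6 + X 3 ^ 6) +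
        C A * quadricPlus K ^ 3 + C B * quadricPlus K * quadricMinus K ^ 2} ∧
    invariantSextics ζ = Submodule.span K {X 0 ^ 6 + X 2 ^ 6, X 1 ^ 6 + X 3 ^ 6,
      quadricPlus K ^ 3, quadricPlus K * quadricMinus K ^ 2} ∧
    Module.finrank K (Submodule.span K ({X 0 ^ 6 + X 2 ^ 6, X 1 ^ 6 + X 3 ^ 6,
      quadricPlus K ^ 3, quadricPlus K * quadricMinus K ^ 2} :
        Set (MvPolynomial (Fin 4) K))) = 4 := by
  rw [← range_basicSextic, invariantSextics_eq_span hζ]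
  exact ⟨Set.ext fun _ ↦ mem_span_basicSextic, rfl,
    finrank_span_basicSextic K (two_ne_zero_of_isPrimitiveRoot hζ (by decide))⟩

/-- For `ζ` a primitive 6th root of unity, the homogeneous degree-6 polynomials
fixed by `g₁, g₂, g₃` are exactly those of the form
`α(x₁⁶+x₂⁶) + β(y₁⁶+y₂⁶) + A·Q₊³ + B·Q₊Q₋²`; equivalently the span of the four listed
polynomials, which has dimension 4. -/
theorem invariant_sextics (ζ : ℂ) (hζ : IsPrimitiveRoot ζ 6) :
    ({P : MvPolynomial (Fin 4) ℂ |
        P ∈ homogeneousSubmodule (Fin 4) ℂ 6 ∧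
        sexticG1 ζ P = P ∧ sexticG2 ζ P = P ∧ sexticG3 P = P} =
      {P : MvPolynomial (Fin 4) ℂ | ∃ α β A B : ℂ,
        P = C α * (X 0 ^ 6 + X 2 ^ 6) + C β * (X 1 ^ 6 + X 3 ^ 6) +
            C A * Qplus ^ 3 + C B * Qplus * Qminus ^ 2}) ∧
    ({P : MvPolynomial (Fin 4) ℂ |
        P ∈ homogeneousSubmodule (Fin 4) ℂ 6 ∧
        sexticG1 ζ P = P ∧ sexticG2 ζ P = P ∧ sexticG3 P = P} =
      ↑(Submodule.span ℂ ({X 0 ^ 6 + X 2 ^ 6, X 1 ^ 6 + X 3 ^ 6,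
          Qplus ^ 3, Qplus * Qminus ^ 2} : Set (MvPolynomial (Fin 4) ℂ)))) ∧
    Module.finrank ℂ
      (Submodule.span ℂ ({X 0 ^ 6 + X 2 ^ 6, X 1 ^ 6 + X 3 ^ 6,
          Qplus ^ 3, Qplus * Qminus ^ 2} : Set (MvPolynomial (Fin 4) ℂ))) = 4 :=
  have ⟨hforms, hspan, hrank⟩ := invariant_sextics_general hζ
  ⟨hforms, congrArg SetLike.coe hspan, hrank⟩
end

section
/- Let η ∈ ℂ be a primitive 12th root of unity. For each pair of integers (a,b) with a ≡ b (mod 2), let g_{a,b} be the ℂ-algebra automorphism of ℂ[x₁,y₁,x₂,y₂] determined by x₁ ↦ η^a x₁, y₁ ↦ η^{−a} y₁, x₂ ↦ η^b x₂, y₂ ↦ η^{−b} y₂. Then the subspace of polynomials that are bihomogeneous of bidegree (6,6) (homogeneous of degree 6 in (x₁,y₁) and of degree 6 in (x₂,y₂)) and fixed by g_{a,b} for all such (a,b) is exactly the ℂ-span of the five monomials y₁⁶y₂⁶, x₁⁶y₂⁶, y₁⁶x₂⁶, x₁⁶x₂⁶, x₁³y₁³x₂³y₂³; in particular it has dimension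 5. -/
open MvPolynomial

/-- `g_{a,b} : x₁ ↦ η^a x₁, y₁ ↦ η^{−a} y₁, x₂ ↦ η^b x₂, y₂ ↦ η^{−b} y₂`
(with `x₁ = X 0, y₁ = X 1, x₂ = X 2, y₂ = X 3`). -/
noncomputable def Hgen (η : ℂ) (a b : ℤ) :
    MvPolynomial (Fin 4) ℂ →ₐ[ℂ] MvPolynomial (Fin 4) ℂ :=
  aeval ![C (η ^ a) * X 0, C (η ^ (-a)) * X 1, C (η ^ b) * X 2, C (η ^ (-b)) * X 3]

/-- Bidegree weights: `x₁, y₁` have weight `(1,0)` and `x₂, y₂` have weight `(0,1)`. -/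
def bidegWeight : Fin 4 → ℕ × ℕ := ![(1, 0), (1, 0), (0, 1), (0, 1)]

/-!
Both conditions are diagonal in the monomial basis, so the invariant space is spanned by the
monomials it contains. The monomial `x₁^p y₁^q x₂^r y₂^s` is multiplied by
`η ^ (a (p - q) + b (r - s))` under `g_{a,b}`; this is `1` whenever `a ≡ b (mod 2)` if and only if
`6 ∣ p - q` and `12 ∣ (p - q) + (r - s)`. As `p + q = r + s = 6`, both differences lie in
`{-6, 0, 6}`, and the second divisibility says that they vanish together.
-/

theorem zpow_weight {σ G : Type*} [CommGroup G] (w : σ → ℤ) (u : G) (d : σ →₀ ℕ) :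
    u ^ Finsupp.weight w d = d.prod fun i k => (u ^ w i) ^ k := by
  classical
  induction d using Finsupp.induction_linear with
  | zero => simp
  | add d e hd he =>
    rw [map_add, zpow_add, hd, he, Finsupp.prod_add_index' (by simp) (by simp [pow_add])]
  | single i k =>
    rw [Finsupp.weight_single, Finsupp.prod_single_index (by simp), nsmul_eq_mul, mul_comm,
      zpow_mul, zpow_natCast]

section WeightScaling

variable {σ R : Type*} [CommSemiring R]

/-- The one-parameter subgroup of the diagonal torus with weights `w`, evaluated at the unit `u`:
it sends `X i` to `u ^ w i * X i`. -/
noncomputable def weightScaling (w : σ → ℤ) (u : Rˣ) : MvPolynomial σ R →ₐ[R] MvPolynomial σ R :=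
  aeval fun i => C ((u ^ w i : Rˣ) : R) * X i

theorem weightScaling_monomial (w : σ → ℤ) (u : Rˣ) (d : σ →₀ ℕ) (c : R) :
    weightScaling w u (monomial d c) =
      monomial d (((u ^ Finsupp.weight w d : Rˣ) : R) * c) := by
  rw [weightScaling, aeval_monomial, zpow_weight, monomial_eq]
  simp only [algebraMap_eq, Finsupp.prod, mul_pow, Finset.prod_mul_distrib, Units.coe_prod,
    Units.val_pow_eq_pow_val, map_mul, map_prod, map_pow]
  ring

theorem coeff_weightScaling (w : σ → ℤ) (u : Rˣ) (d : σ →₀ ℕ) (P : MvPolynomial σ R) :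
    coeff d (weightScaling w u P) = ((u ^ Finsupp.weight w d : Rˣ) : R) * coeff d P := by
  classical
  induction P using MvPolynomial.induction_on' with
  | monomial e c =>
    rw [weightScaling_monomial, coeff_monomial, coeff_monomial]
    split_ifs with h
    · rw [h]
    · rw [mul_zero]
  | add P Q hP hQ => rw [map_add, coeff_add, coeff_add, hP, hQ, mul_add]

theorem weightScaling_eq_self_iff [IsCancelMulZero R] {u : Rˣ} {n : ℕ} (hu : IsPrimitiveRoot u n)
    (w : σ → ℤ) (P : MvPolynomial σ R) :
    weightScaling w u P = P ↔ ∀ d ∈ P.support, (n : ℤ) ∣ Finsupp.weight w d := by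
  simp only [MvPolynomial.ext_iff, coeff_weightScaling, mul_left_eq_self₀, mem_support_iff,
    ← hu.zpow_eq_one_iff_dvd, Units.val_eq_one, or_iff_not_imp_right, ne_eq]

end WeightScaling

theorem finrank_restrictSupport {σ : Type*} (R : Type*) [CommSemiring R] [StrongRankCondition R]
    (s : Set (σ →₀ ℕ)) : Module.finrank R (restrictSupport R s) = s.ncard := by
  rw [Module.finrank_eq_nat_card_basis (basisRestrictSupport R s), Nat.card_coe_set_eq]

theorem forall_modEq_dvd_add_iff {r : ℤ} (hr : r ≠ 0) (n m k : ℤ) :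
    (∀ a b : ℤ, a ≡ b [ZMOD r] → r * n ∣ a * m + b * k) ↔ n ∣ m ∧ r * n ∣ m + k := by
  constructor
  · intro h
    have hm : r * n ∣ r * m := by simpa using h r 0 (by simp [Int.ModEq])
    have hmk : r * n ∣ m + k := by simpa using h 1 1 rfl
    exact ⟨(mul_dvd_mul_iff_left hr).mp hm, hmk⟩
  · rintro ⟨hm, hmk⟩ a b hab
    obtain ⟨c, hc⟩ := hab.symm.dvd
    have hsplit : a * m + b * k = b * (m + k) + c * (r * m) := by linear_combination m * hc
    rw [hsplit]
    exact dvd_add (hmk.mul_left b) ((mul_dvd_mul_left r hm).mul_left c)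

/-- The exponent vectors `(p, q, r, s)` of the five monomials `x₁^p y₁^q x₂^r y₂^s` of
bidegree `(6, 6)` invariant under all `g_{a,b}`. -/
def invariantExponents : Finset (Fin 4 → ℕ) :=
  {![0, 6, 0, 6], ![6, 0, 0, 6], ![0, 6, 6, 0], ![6, 0, 6, 0], ![3, 3, 3, 3]}

theorem mem_invariantExponents_iff {v : Fin 4 → ℕ} :
    v ∈ invariantExponents ↔
      (v 0 + v 1 = 6 ∧ v 2 + v 3 = 6) ∧
        (6 : ℤ) ∣ v 0 - v 1 ∧ (2 * 6 : ℤ) ∣ (v 0 - v 1) + (v 2 - v 3) := by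
  simp only [invariantExponents, Finset.mem_insert, Finset.mem_singleton, funext_iff,
    Fin.forall_fin_succ, IsEmpty.forall_iff, and_true, Fin.succ_zero_eq_one, Fin.succ_one_eq_two,
    Fin.reduceSucc, Matrix.cons_val]
  omega

theorem weight_bidegWeight (d : Fin 4 →₀ ℕ) :
    Finsupp.weight bidegWeight d = (d 0 + d 1, d 2 + d 3) := by
  rw [Finsupp.weight_apply, Finsupp.sum_fintype _ _ (by simp), Fin.sum_univ_four]
  simp [bidegWeight]

theorem weight_vecCons_neg (a b : ℤ) (d : Fin 4 →₀ ℕ) :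
    Finsupp.weight ![a, -a, b, -b] d = a * (d 0 - d 1) + b * (d 2 - d 3) := by
  rw [Finsupp.weight_apply, Finsupp.sum_fintype _ _ (by simp), Fin.sum_univ_four]
  simp only [Matrix.cons_val, nsmul_eq_mul]
  ring

theorem coe_mem_invariantExponents_iff (d : Fin 4 →₀ ℕ) :
    ⇑d ∈ invariantExponents ↔
      Finsupp.weight bidegWeight d = (6, 6) ∧
        ∀ a b : ℤ, a ≡ b [ZMOD 2] → (12 : ℤ) ∣ Finsupp.weight ![a, -a, b, -b] d := by
  simp only [mem_invariantExponents_iff, weight_bidegWeight, Prod.mk.injEq, weight_vecCons_neg]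
  rw [← forall_modEq_dvd_add_iff two_ne_zero]
  norm_num

theorem setOf_coe_mem_invariantExponents_eq_image :
    {d : Fin 4 →₀ ℕ | ⇑d ∈ invariantExponents} =
      Finsupp.equivFunOnFinite.symm '' (invariantExponents : Set (Fin 4 → ℕ)) := by
  rw [Equiv.image_symm_eq_preimage]
  rfl

theorem ncard_coe_mem_invariantExponents :
    {d : Fin 4 →₀ ℕ | ⇑d ∈ invariantExponents}.ncard = 5 := by
  rw [setOf_coe_mem_invariantExponents_eq_image, Set.ncard_image_of_injective _ (Equiv.injective _),
    Set.ncard_coe_finset]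
  rfl

theorem restrictSupport_invariantExponents_eq_span (R : Type*) [CommSemiring R] :
    restrictSupport R {d : Fin 4 →₀ ℕ | ⇑d ∈ invariantExponents} =
      Submodule.span R
        ({X 1 ^ 6 * X 3 ^ 6, X 0 ^ 6 * X 3 ^ 6, X 1 ^ 6 * X 2 ^ 6, X 0 ^ 6 * X 2 ^ 6,
          X 0 ^ 3 * X 1 ^ 3 * X 2 ^ 3 * X 3 ^ 3} : Set (MvPolynomial (Fin 4) R)) := by
  rw [restrictSupport_eq_span, setOf_coe_mem_invariantExponents_eq_image, Set.image_image]
  simp [invariantExponents, Set.image_insert_eq, monomial_eq, Finsupp.prod_fintype,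
    Fin.prod_univ_four]

theorem mem_restrictSupport_invariantExponents_iff {R : Type*} [CommSemiring R] [IsCancelMulZero R]
    {u : Rˣ} (hu : IsPrimitiveRoot u 12) (P : MvPolynomial (Fin 4) R) :
    P ∈ restrictSupport R {d : Fin 4 →₀ ℕ | ⇑d ∈ invariantExponents} ↔
      IsWeightedHomogeneous bidegWeight P (6, 6) ∧
        ∀ a b : ℤ, a ≡ b [ZMOD 2] → weightScaling ![a, -a, b, -b] u P = P := by
  simp only [mem_restrictSupport_iff, Set.subset_def, Finset.mem_coe, Set.mem_ofPred_eq,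
    coe_mem_invariantExponents_iff, IsWeightedHomogeneous, mem_support_iff, ne_eq,
    weightScaling_eq_self_iff hu, Nat.cast_ofNat]
  exact ⟨fun h => ⟨fun {d} hd => (h d hd).1, fun a b hab d hd => (h d hd).2 a b hab⟩,
    fun h d hd => ⟨h.1 hd, fun a b hab => h.2 a b hab d hd⟩⟩

theorem invariant_bidegree_six_six_general {R : Type*} [CommRing R] [IsDomain R] {u : Rˣ}
    (hu : IsPrimitiveRoot u 12) :
    ({P : MvPolynomial (Fin 4) R |
        IsWeightedHomogeneous bidegWeight P (6, 6) ∧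
        ∀ a b : ℤ, a ≡ b [ZMOD 2] → weightScaling ![a, -a, b, -b] u P = P} =
      ↑(Submodule.span R
        ({X 1 ^ 6 * X 3 ^ 6, X 0 ^ 6 * X 3 ^ 6, X 1 ^ 6 * X 2 ^ 6, X 0 ^ 6 * X 2 ^ 6,
          X 0 ^ 3 * X 1 ^ 3 * X 2 ^ 3 * X 3 ^ 3} : Set (MvPolynomial (Fin 4) R)))) ∧
    Module.finrank R
      (Submodule.span R
        ({X 1 ^ 6 * X 3 ^ 6, X 0 ^ 6 * X 3 ^ 6, X 1 ^ 6 * X 2 ^ 6, X 0 ^ 6 * X 2 ^ 6,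
          X 0 ^ 3 * X 1 ^ 3 * X 2 ^ 3 * X 3 ^ 3} : Set (MvPolynomial (Fin 4) R))) = 5 := by
  rw [← restrictSupport_invariantExponents_eq_span, finrank_restrictSupport]
  exact ⟨Set.ext fun P => (mem_restrictSupport_invariantExponents_iff hu P).symm,
    ncard_coe_mem_invariantExponents⟩

theorem Hgen_eq_weightScaling (u : ℂˣ) (a b : ℤ) :
    Hgen u a b = weightScaling ![a, -a, b, -b] u := by
  ext i : 1
  fin_cases i <;> simp [Hgen, weightScaling]

/-- For `η` a primitive 12th root of unity, the bidegree-(6,6) polynomials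
fixed by all `g_{a,b}` with `a ≡ b (mod 2)` are exactly the span of the five monomials
`y₁⁶y₂⁶, x₁⁶y₂⁶, y₁⁶x₂⁶, x₁⁶x₂⁶, x₁³y₁³x₂³y₂³`; in particular this space has dimension 5. -/
theorem invariant_bidegree_six_six (η : ℂ) (hη : IsPrimitiveRoot η 12) :
    ({P : MvPolynomial (Fin 4) ℂ |
        IsWeightedHomogeneous bidegWeight P (6, 6) ∧
        ∀ a b : ℤ, a % 2 = b % 2 → Hgen η a b P = P} =
      ↑(Submodule.span ℂ
        ({X 1 ^ 6 * X 3 ^ 6, X 0 ^ 6 * X 3 ^ 6, X 1 ^ 6 * X 2 ^ 6, X 0 ^ 6 * X 2 ^ 6,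
          X 0 ^ 3 * X 1 ^ 3 * X 2 ^ 3 * X 3 ^ 3} : Set (MvPolynomial (Fin 4) ℂ)))) ∧
    Module.finrank ℂ
      (Submodule.span ℂ
        ({X 1 ^ 6 * X 3 ^ 6, X 0 ^ 6 * X 3 ^ 6, X 1 ^ 6 * X 2 ^ 6, X 0 ^ 6 * X 2 ^ 6,
          X 0 ^ 3 * X 1 ^ 3 * X 2 ^ 3 * X 3 ^ 3} : Set (MvPolynomial (Fin 4) ℂ))) = 5 := by
  obtain ⟨u, rfl⟩ := hη.isUnit (by norm_num)
  simp only [Hgen_eq_weightScaling]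
  exact invariant_bidegree_six_six_general (IsPrimitiveRoot.coe_units_iff.mp hη)
end

section
/- Let ζ ∈ ℂ be a primitive 6th root of unity and let g₁, g₂, g₃ be the linear automorphisms of ℂ⁴ (with standard basis e₁, e₂, e₃, e₄) given by g₁ = diag(ζ, ζ⁻¹, 1, 1), g₂ = diag(1, 1, ζ, ζ⁻¹), and g₃ : (v₁,v₂,v₃,v₄) ↦ (v₃,v₄,v₁,v₂). Then the space of alternating ℂ-bilinear forms B on ℂ⁴ satisfying B(g·u, g·v) = B(u,v) for g ∈ {g₁, g₂, g₃} is exactly the set of scalar multiples of the form ω defined by ω(u,v) = u₁v₂ − u₂v₁ + u₃v₄ − u₄v₃; in particular it is 1-dimensional. (This is the statement that the G-invariant part of Λ²U*, the dual of the obstruction space H⁰(T*S ⊗ K_S) for the G-invariant sextic surfaces, is 1-dimensional, spanned by ω = dx₁dy₁ + dx₂dy₂.) -/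
/-- The standard symplectic form `ω(u,v) = u₁v₂ − u₂v₁ + u₃v₄ − u₄v₃` on `ℂ⁴`. -/
noncomputable def omegaForm : (Fin 4 → ℂ) →ₗ[ℂ] (Fin 4 → ℂ) →ₗ[ℂ] ℂ :=
  LinearMap.mk₂ ℂ (fun u v => u 0 * v 1 - u 1 * v 0 + u 2 * v 3 - u 3 * v 2)
    (by intros; simp only [Pi.add_apply]; ring)
    (by intros; simp only [Pi.smul_apply, smul_eq_mul]; ring)
    (by intros; simp only [Pi.add_apply]; ring)
    (by intros; simp only [Pi.smul_apply, smul_eq_mul]; ring)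

/-- `g₁ = diag(ζ, ζ⁻¹, 1, 1)` on `ℂ⁴`. -/
noncomputable def symG1 (ζ : ℂ) (v : Fin 4 → ℂ) : Fin 4 → ℂ := ![ζ * v 0, ζ⁻¹ * v 1, v 2, v 3]

/-- `g₂ = diag(1, 1, ζ, ζ⁻¹)` on `ℂ⁴`. -/
noncomputable def symG2 (ζ : ℂ) (v : Fin 4 → ℂ) : Fin 4 → ℂ := ![v 0, v 1, ζ * v 2, ζ⁻¹ * v 3]

/-- `g₃ : (v₁,v₂,v₃,v₄) ↦ (v₃,v₄,v₁,v₂)` on `ℂ⁴`. -/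
def symG3 (v : Fin 4 → ℂ) : Fin 4 → ℂ := ![v 2, v 3, v 0, v 1]

/-!
The standard basis vectors are eigenvectors of `g₁` with eigenvalues `ζ, ζ⁻¹, 1, 1`, and an
invariant form pairs two eigenvectors to zero unless the product of their eigenvalues is `1`. As
`ζ ≠ 1`, the planes `⟨e₁, e₂⟩` and `⟨e₃, e₄⟩` are therefore orthogonal. On each plane an alternating
form is determined by one scalar, and `g₃`, which exchanges the planes, makes the two scalars equal.
-/

section BilinearMap

variable {R M N ι : Type*} [CommRing R] [AddCommGroup M] [Module R M] [AddCommGroup N] [Module R N]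

theorem apply_eq_zero_of_apply_smul_smul_eq {M' : Type*} [AddCommGroup M'] [Module R M']
    [IsDomain R] [Module.IsTorsionFree R N] {B : M →ₗ[R] M' →ₗ[R] N} {a b : R} {u : M} {v : M'}
    (h : B (a • u) (b • v) = B u v) (hab : a * b ≠ 1) : B u v = 0 := by
  have h_smul : (a * b - 1) • B u v = 0 := by
    rwa [sub_smul, one_smul, sub_eq_zero, mul_smul, ← map_smul, ← LinearMap.smul_apply,
      ← map_smul]
  exact (smul_eq_zero.mp h_smul).resolve_left (sub_ne_zero.mpr hab)

theorem isAlt_ext_basis [LinearOrder ι] (b : Module.Basis ι R M) {B B' : M →ₗ[R] M →ₗ[R] N}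
    (hB : B.IsAlt) (hB' : B'.IsAlt) (h : ∀ i j, i < j → B (b i) (b j) = B' (b i) (b j)) :
    B = B' := by
  refine LinearMap.ext_basis b b fun i j => ?_
  obtain hij | rfl | hji := lt_trichotomy i j
  · exact h i j hij
  · rw [hB.self_eq_zero, hB'.self_eq_zero]
  · rw [← hB.neg, ← hB'.neg, h j i hji]

end BilinearMap

theorem omegaForm_apply (u v : Fin 4 → ℂ) :
    omegaForm u v = u 0 * v 1 - u 1 * v 0 + u 2 * v 3 - u 3 * v 2 :=
  rfl

theorem omegaForm_isAlt : omegaForm.IsAlt := fun v => by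
  rw [omegaForm_apply]
  ring

theorem omegaForm_symG1 {ζ : ℂ} (hζ : ζ ≠ 0) (u v : Fin 4 → ℂ) :
    omegaForm (symG1 ζ u) (symG1 ζ v) = omegaForm u v := by
  simp only [omegaForm_apply, symG1, Matrix.cons_val]
  field_simp

theorem omegaForm_symG2 {ζ : ℂ} (hζ : ζ ≠ 0) (u v : Fin 4 → ℂ) :
    omegaForm (symG2 ζ u) (symG2 ζ v) = omegaForm u v := by
  simp only [omegaForm_apply, symG2, Matrix.cons_val]
  field_simp

theorem omegaForm_symG3 (u v : Fin 4 → ℂ) :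
    omegaForm (symG3 u) (symG3 v) = omegaForm u v := by
  simp only [omegaForm_apply, symG3, Matrix.cons_val]
  ring

theorem omegaForm_ne_zero : omegaForm ≠ 0 := by
  intro h
  have h01 : omegaForm (Pi.single 0 1) (Pi.single 1 1) = 1 := by simp [omegaForm_apply]
  simp [h] at h01

theorem symG1_single (ζ : ℂ) (i : Fin 4) (x : ℂ) :
    symG1 ζ (Pi.single i x) = ![ζ, ζ⁻¹, 1, 1] i • Pi.single i x := by
  ext j
  fin_cases i <;> fin_cases j <;> simp [symG1]

theorem symG3_single (i : Fin 4) (x : ℂ) : symG3 (Pi.single i x) = Pi.single (i + 2) x := by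
  ext j
  fin_cases i <;> fin_cases j <;> simp [symG3]

section Invariant

variable {ζ : ℂ} {B : (Fin 4 → ℂ) →ₗ[ℂ] (Fin 4 → ℂ) →ₗ[ℂ] ℂ}

theorem apply_single_single_eq_zero_of_symG1_invariant
    (hB₁ : ∀ u v, B (symG1 ζ u) (symG1 ζ v) = B u v) {i j : Fin 4}
    (hij : ![ζ, ζ⁻¹, 1, 1] i * ![ζ, ζ⁻¹, 1, 1] j ≠ 1) (x y : ℂ) :
    B (Pi.single i x) (Pi.single j y) = 0 := by
  refine apply_eq_zero_of_apply_smul_smul_eq ?_ hij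
  rw [← symG1_single, ← symG1_single, hB₁]

theorem eq_smul_omegaForm_of_isAlt_of_invariant (hζ : ζ ≠ 1) (hB : B.IsAlt)
    (hB₁ : ∀ u v, B (symG1 ζ u) (symG1 ζ v) = B u v)
    (hB₃ : ∀ u v, B (symG3 u) (symG3 v) = B u v) :
    B = B (Pi.single 0 1) (Pi.single 1 1) • omegaForm := by
  have h_cross (i j : Fin 4) (hi : i < 2) (hj : 2 ≤ j) :
      B (Pi.single i 1) (Pi.single j 1) = 0 := by
    refine apply_single_single_eq_zero_of_symG1_invariant hB₁ ?_ 1 1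
    fin_cases i <;> fin_cases j <;> first | contradiction | simpa using hζ
  have h_block : B (Pi.single 2 1) (Pi.single 3 1) = B (Pi.single 0 1) (Pi.single 1 1) := by
    rw [← hB₃ (Pi.single 0 1), symG3_single, symG3_single]
    rfl
  have h_smul_isAlt : (B (Pi.single 0 1) (Pi.single 1 1) • omegaForm).IsAlt := fun v => by
    rw [LinearMap.smul_apply, LinearMap.smul_apply, omegaForm_isAlt, smul_zero]
  refine isAlt_ext_basis (Pi.basisFun ℂ (Fin 4)) hB h_smul_isAlt fun i j hij => ?_
  fin_cases i <;> fin_cases j <;> first | contradiction | simp [omegaForm_apply, h_cross, h_block]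

end Invariant

theorem invariant_alternating_forms_general {ζ : ℂ} (hζ₀ : ζ ≠ 0) (hζ₁ : ζ ≠ 1) :
    ({B : (Fin 4 → ℂ) →ₗ[ℂ] (Fin 4 → ℂ) →ₗ[ℂ] ℂ |
        (∀ v, B v v = 0) ∧
        (∀ u v, B (symG1 ζ u) (symG1 ζ v) = B u v) ∧
        (∀ u v, B (symG2 ζ u) (symG2 ζ v) = B u v) ∧
        (∀ u v, B (symG3 u) (symG3 v) = B u v)} =
      {B : (Fin 4 → ℂ) →ₗ[ℂ] (Fin 4 → ℂ) →ₗ[ℂ] ℂ | ∃ c : ℂ, B = c • omegaForm}) ∧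
    omegaForm ≠ 0 := by
  refine ⟨Set.ext fun B => ⟨?_, ?_⟩, omegaForm_ne_zero⟩
  · rintro ⟨hB, hB₁, -, hB₃⟩
    exact ⟨_, eq_smul_omegaForm_of_isAlt_of_invariant hζ₁ hB hB₁ hB₃⟩
  · rintro ⟨c, rfl⟩
    simp only [Set.mem_ofPred_eq, LinearMap.smul_apply]
    exact ⟨fun v => by rw [omegaForm_isAlt, smul_zero], fun u v => by rw [omegaForm_symG1 hζ₀],
      fun u v => by rw [omegaForm_symG2 hζ₀], fun u v => by rw [omegaForm_symG3]⟩

/-- For `ζ` a primitive 6th root of unity, the alternating bilinear forms on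
`ℂ⁴` invariant under `g₁, g₂, g₃` are exactly the scalar multiples of
`ω(u,v) = u₁v₂ − u₂v₁ + u₃v₄ − u₄v₃`; in particular (`ω ≠ 0`) this space is
1-dimensional. -/
theorem invariant_alternating_forms (ζ : ℂ) (hζ : IsPrimitiveRoot ζ 6) :
    ({B : (Fin 4 → ℂ) →ₗ[ℂ] (Fin 4 → ℂ) →ₗ[ℂ] ℂ |
        (∀ v, B v v = 0) ∧
        (∀ u v, B (symG1 ζ u) (symG1 ζ v) = B u v) ∧
        (∀ u v, B (symG2 ζ u) (symG2 ζ v) = B u v) ∧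
        (∀ u v, B (symG3 u) (symG3 v) = B u v)} =
      {B : (Fin 4 → ℂ) →ₗ[ℂ] (Fin 4 → ℂ) →ₗ[ℂ] ℂ | ∃ c : ℂ, B = c • omegaForm}) ∧
    omegaForm ≠ 0 :=
  invariant_alternating_forms_general (hζ.ne_zero (by norm_num)) (hζ.ne_one (by norm_num))
end
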